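/- arXiv:1610.07904 — 3 statements merged into one kernel-verified Lean document; each statement's English description precedes it below -/
import Mathlib

section
/- Let K be a field of characteristic zero equipped with a nonarchimedean absolute value v, let d ≥ 2 be an integer, and let a₀, …, a_d, b₀, …, b_d ∈ K. Define the binary forms F₁(x, y) = a_d x^d + a_{d−1} x^{d−1} y + ⋯ + a₀ y^d and F₂(x, y) = b_d x^d + ⋯ + b₀ y^d, let R be the resultant of F₁ and F₂, and set C = max{v(a₀), …, v(a_d), v(b₀), …, v(b_d)}. Then for every (x, y) ∈ K² with (x, y) ≠ (0, 0): max(v(F₁(x, y)), v(F₂(x, y))) · C^{2d−1} ≥ v(R) · (max(v(x), v(y)))^d. -/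
/-!
The vector `w` of monomials `x ^ (2d-1-j) * y ^ j` is mapped by the Sylvester matrix `S` to the
vector with entries `x ^ (d-1-i) * y ^ i * F₁(x, y)` and `x ^ (d-1-i) * y ^ i * F₂(x, y)`
(`sylvesterMatrix_mulVec_monomials`). Multiplying by the adjugate gives `R * w = adj(S) * (S * w)`,
which expresses `R * x ^ (2d-1)` and `R * y ^ (2d-1)` as combinations of `F₁(x, y)` and `F₂(x, y)`.
The entries of `adj(S)` are minors of size `2d-1`, so by the ultrametric inequality they are at most
`C ^ (2d-1)` (`abv_adjugate_le`). With `m = max (v x) (v y)` this yields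
`v R * m ^ (2d-1) ≤ C ^ (2d-1) * m ^ (d-1) * max (v F₁) (v F₂)`, and `m ^ (d-1)` cancels.
-/

/-- The `2d × 2d` Sylvester matrix built from the coefficient sequences
`(a_d, …, a₀)` and `(b_d, …, b₀)` of two binary forms of degree `d`
(`a i` is the coefficient of `x^i y^{d-i}`).  Its determinant is the resultant. -/
def sylvesterMatrix {R : Type*} [CommRing R] (d : ℕ) (a b : ℕ → R) :
    Matrix (Fin (2 * d)) (Fin (2 * d)) R :=
  Matrix.of fun i j =>
    if (i : ℕ) < d then
      (if (i : ℕ) ≤ (j : ℕ) ∧ (j : ℕ) ≤ (i : ℕ) + d then a (d + (i : ℕ) - (j : ℕ)) else 0)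
    else
      (if (i : ℕ) - d ≤ (j : ℕ) ∧ (j : ℕ) ≤ (i : ℕ) then b (d + ((i : ℕ) - d) - (j : ℕ)) else 0)

lemma abv_sum_le {K ι : Type*} [Field K] (v : AbsoluteValue K ℝ) (hv : IsNonarchimedean v)
    (s : Finset ι) (f : ι → K) (B : ℝ) (hB : 0 ≤ B) (h : ∀ i ∈ s, v (f i) ≤ B) :
    v (∑ i ∈ s, f i) ≤ B := by
  classical
  induction s using Finset.induction_on with
  | empty => simpa using hB
  | insert i s his ih =>
    rw [Finset.sum_insert his]
    exact (hv _ _).trans (max_le (h i (Finset.mem_insert_self _ _))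
      (ih fun j hj => h j (Finset.mem_insert_of_mem hj)))

/-- Entries of the adjugate are minors of size one less, so they satisfy the ultrametric
Hadamard-type bound with one factor fewer. -/
lemma abv_adjugate_le {K n : Type*} [Field K] [Fintype n] [DecidableEq n]
    (v : AbsoluteValue K ℝ) (hv : IsNonarchimedean v) (A : Matrix n n K) (C : ℝ) (hC : 0 ≤ C)
    (hA : ∀ i j, v (A i j) ≤ C) (i j : n) :
    v (A.adjugate i j) ≤ C ^ (Fintype.card n - 1) := by
  rw [Matrix.adjugate_apply, Matrix.det_apply]
  refine abv_sum_le v hv _ _ _ (pow_nonneg hC _) fun σ _ => ?_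
  have hsign : ∀ z : K, v (Equiv.Perm.sign σ • z) = v z := by
    intro z
    rcases Int.units_eq_one_or (Equiv.Perm.sign σ) with h | h <;> simp [h]
  rw [hsign, map_prod]
  -- The factor coming from the row replaced by a basis vector is at most `1`.
  calc ∏ k, v (A.updateRow j (Pi.single i 1) (σ k) k)
      ≤ ∏ k, (if k = σ.symm j then 1 else C) := by
        refine Finset.prod_le_prod (fun _ _ => v.nonneg _) fun k _ => ?_
        by_cases hk : k = σ.symm j
        · subst hk
          by_cases h : σ.symm j = i
          · have hσ : σ i = j := by simp [← h]
            simp [h, hσ]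
          · simp [Pi.single_eq_of_ne h]
        · have : σ k ≠ j := fun h => hk (by simp [← h])
          simpa [hk, this] using hA (σ k) k
    _ = C ^ (Fintype.card n - 1) := by
        rw [Finset.prod_ite]
        simp [Finset.filter_ne', Finset.card_erase_of_mem]

/-- One row of the Sylvester matrix, as a sum over all column indices: the window of length `d + 1`
starting at column `i` collects exactly the terms of the form of degree `d`. -/
lemma sum_window {K : Type*} [Field K] (d i : ℕ) (hi : i < d) (a : ℕ → K) (x y : K) :
    ∑ j ∈ Finset.range (2 * d),
        (if i ≤ j ∧ j ≤ i + d then a (d + i - j) else 0) * (x ^ (2 * d - 1 - j) * y ^ j) =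
      x ^ (d - 1 - i) * y ^ i * ∑ k ∈ Finset.range (d + 1), a k * x ^ k * y ^ (d - k) := by
  rw [Finset.mul_sum]
  symm
  refine Finset.sum_of_injOn (fun k => d + i - k) ?_ ?_ ?_ ?_
  · intro k hk l hl h
    simp only [Finset.coe_range, Set.mem_Iio] at hk hl h
    omega
  · intro k hk
    simp only [Finset.coe_range, Set.mem_Iio] at hk ⊢
    omega
  · intro j hj hne
    rw [if_neg, zero_mul]
    rintro ⟨h1, h2⟩
    refine hne ⟨d + i - j, ?_, ?_⟩
    · simp only [Finset.coe_range, Set.mem_Iio]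
      omega
    · simp only
      omega
  · intro k hk
    rw [Finset.mem_range] at hk
    rw [if_pos (by omega), show d + i - (d + i - k) = k by omega,
      show 2 * d - 1 - (d + i - k) = (d - 1 - i) + k by omega,
      show d + i - k = i + (d - k) by omega, pow_add, pow_add]
    ring

lemma sylvesterMatrix_mulVec_monomials {K : Type*} [Field K] (d : ℕ) (a b : ℕ → K) (x y : K)
    (i : Fin (2 * d)) :
    (sylvesterMatrix d a b).mulVec (fun j => x ^ (2 * d - 1 - (j : ℕ)) * y ^ (j : ℕ)) i =
      if (i : ℕ) < d then
        x ^ (d - 1 - (i : ℕ)) * y ^ (i : ℕ) *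
          ∑ k ∈ Finset.range (d + 1), a k * x ^ k * y ^ (d - k)
      else
        x ^ (d - 1 - ((i : ℕ) - d)) * y ^ ((i : ℕ) - d) *
          ∑ k ∈ Finset.range (d + 1), b k * x ^ k * y ^ (d - k) := by
  have hi := i.isLt
  simp only [Matrix.mulVec, dotProduct, sylvesterMatrix, Matrix.of_apply]
  split_ifs with h
  · rw [← sum_window d i h a x y, ← Fin.sum_univ_eq_sum_range (fun j =>
      (if (i : ℕ) ≤ j ∧ j ≤ (i : ℕ) + d then a (d + (i : ℕ) - j) else 0) *
        (x ^ (2 * d - 1 - j) * y ^ j))]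
  · rw [← sum_window d (i - d) (by omega) b x y, ← Fin.sum_univ_eq_sum_range (fun j =>
      (if (i : ℕ) - d ≤ j ∧ j ≤ (i : ℕ) - d + d then b (d + ((i : ℕ) - d) - j) else 0) *
        (x ^ (2 * d - 1 - j) * y ^ j)), Nat.sub_add_cancel (by omega)]

/-- Nonarchimedean lower bound for a pair of binary forms:
for all `(x,y) ≠ (0,0)`,
`max(v(F₁(x,y)), v(F₂(x,y))) · C^{2d-1} ≥ v(Res(F₁,F₂)) · max(v(x),v(y))^d`,
where `C` is the maximum of `v` over the coefficients. -/
theorem resultant_lower_bound_nonarch {K : Type*} [Field K] [CharZero K]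
    (v : AbsoluteValue K ℝ) (hv : IsNonarchimedean v)
    (d : ℕ) (hd : 2 ≤ d) (a b : ℕ → K)
    (F₁ F₂ : K → K → K)
    (hF₁ : ∀ x y : K, F₁ x y = ∑ i ∈ Finset.range (d + 1), a i * x ^ i * y ^ (d - i))
    (hF₂ : ∀ x y : K, F₂ x y = ∑ i ∈ Finset.range (d + 1), b i * x ^ i * y ^ (d - i))
    (R : K) (hR : R = (sylvesterMatrix d a b).det)
    (C : ℝ) (hC : C = (Finset.range (d + 1)).sup'
      (Finset.nonempty_range_iff.mpr (by omega))
      fun i => max (v (a i)) (v (b i))) :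
    ∀ x y : K, (x, y) ≠ (0, 0) →
      max (v (F₁ x y)) (v (F₂ x y)) * C ^ (2 * d - 1) ≥
        v R * (max (v x) (v y)) ^ d := by
  intro x y hxy
  set S := sylvesterMatrix d a b with hS
  set m := max (v x) (v y) with hm
  set M := max (v (F₁ x y)) (v (F₂ x y)) with hM
  have hmpos : 0 < m := by
    by_cases hx : x = 0
    · have hy : y ≠ 0 := fun hy => hxy (by rw [hx, hy])
      exact lt_max_of_lt_right (v.pos hy)
    · exact lt_max_of_lt_left (v.pos hx)
  have hM0 : 0 ≤ M := le_max_of_le_left (v.nonneg _)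
  have hcoef : ∀ i, i ≤ d → v (a i) ≤ C ∧ v (b i) ≤ C := by
    intro i hi
    rw [← max_le_iff, hC]
    exact Finset.le_sup' (fun i => max (v (a i)) (v (b i)))
      (Finset.mem_range.mpr (Nat.lt_succ_of_le hi))
  have hC0 : 0 ≤ C := (v.nonneg _).trans (hcoef 0 (Nat.zero_le _)).1
  have hentry : ∀ i j, v (S i j) ≤ C := by
    intro i j
    simp only [hS, sylvesterMatrix, Matrix.of_apply]
    split_ifs with h1 h2 h2
    · exact (hcoef _ (by omega)).1
    · simpa using hC0
    · exact (hcoef _ (by omega)).2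
    · simpa using hC0
  have hadj : ∀ i j, v (S.adjugate i j) ≤ C ^ (2 * d - 1) := by
    intro i j
    simpa using abv_adjugate_le v hv S C hC0 hentry i j
  set w : Fin (2 * d) → K := fun j => x ^ (2 * d - 1 - (j : ℕ)) * y ^ (j : ℕ) with hw
  have hmono : ∀ p q, p + q = d - 1 → v (x ^ p * y ^ q) ≤ m ^ (d - 1) := by
    intro p q hpq
    rw [← hpq, pow_add, map_mul, map_pow, map_pow]
    exact mul_le_mul (pow_le_pow_left₀ (v.nonneg _) (le_max_left _ _) _)
      (pow_le_pow_left₀ (v.nonneg _) (le_max_right _ _) _) (pow_nonneg (v.nonneg _) _)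
      (pow_nonneg hmpos.le _)
  have hSw : ∀ i, v (S.mulVec w i) ≤ m ^ (d - 1) * M := by
    intro i
    have hi := i.isLt
    rw [hS, hw, sylvesterMatrix_mulVec_monomials, ← hF₁, ← hF₂]
    split_ifs with h
    · rw [map_mul]
      exact mul_le_mul (hmono _ _ (by omega)) (le_max_left _ _) (v.nonneg _)
        (pow_nonneg hmpos.le _)
    · rw [map_mul]
      exact mul_le_mul (hmono _ _ (by omega)) (le_max_right _ _) (v.nonneg _)
        (pow_nonneg hmpos.le _)
  have hRw : ∀ j, v R * v (w j) ≤ C ^ (2 * d - 1) * (m ^ (d - 1) * M) := by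
    intro j
    have h : R * w j = ∑ i, S.adjugate j i * S.mulVec w i := by
      have h1 : S.adjugate.mulVec (S.mulVec w) j = R * w j := by
        rw [Matrix.mulVec_mulVec, Matrix.adjugate_mul, Matrix.smul_mulVec, Matrix.one_mulVec,
          Pi.smul_apply, smul_eq_mul, hR]
      rw [← h1]
      rfl
    rw [← map_mul, h]
    refine abv_sum_le v hv _ _ _ (by positivity) fun i _ => ?_
    rw [map_mul]
    exact mul_le_mul (hadj j i) (hSw i) (v.nonneg _) (pow_nonneg hC0 _)
  -- The extreme entries of `w` are `x ^ (2d-1)` and `y ^ (2d-1)`; one of them has value `m ^ (2d-1)`.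
  have key : v R * m ^ (2 * d - 1) ≤ C ^ (2 * d - 1) * (m ^ (d - 1) * M) := by
    rcases max_choice (v x) (v y) with h | h
    · have := hRw ⟨0, by omega⟩
      rw [hm, h]
      rw [hm, h] at this
      simpa [hw] using this
    · have := hRw ⟨2 * d - 1, by omega⟩
      rw [hm, h]
      rw [hm, h] at this
      simpa [hw] using this
  refine le_of_mul_le_mul_right ?_ (pow_pos hmpos (d - 1))
  calc v R * m ^ d * m ^ (d - 1) = v R * m ^ (2 * d - 1) := by
        rw [mul_assoc, ← pow_add]
        congr 2
        omega
    _ ≤ C ^ (2 * d - 1) * (m ^ (d - 1) * M) := key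
    _ = M * C ^ (2 * d - 1) * m ^ (d - 1) := by ring
end

section
/- Let K be a field of characteristic zero equipped with a nonarchimedean absolute value v. Let λ₀, λ_∞ ∈ K with λ₀ λ_∞ ≠ 1, and define F : K² → K² by F(x, y) = (λ₀ x y + x², λ_∞ x y + y²), with Fⁿ its n-fold composition. Suppose (x, y) ∈ K² with (x, y) ≠ (0, 0), and suppose that the real sequence n ↦ 2^{−n} · log max(v(F₁ⁿ(x, y)), v(F₂ⁿ(x, y))) (where Fⁿ(x, y) = (F₁ⁿ(x, y), F₂ⁿ(x, y))) converges to a real number H. Then H ≥ log max(v(x), v(y)) − 2 · log max{1, v(λ₀), v(λ_∞)} + log v(1 − λ₀ λ_∞). -/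
/-!
Write `a = λ₀`, `b = λ_∞`, `(P, Q) = F(x, y)`, `L = max {1, v(a), v(b)}`. The forms `P` and `Q`
satisfy the elimination identities
`(1 - ab) x³ = ((1 - ab) x - a y) P + a² x Q` and `(1 - ab) y³ = ((1 - ab) y - b x) Q + b² y P`,
whose coefficients are bounded by `L² ‖(x, y)‖` by the ultrametric inequality. Hence
`v(1 - ab) ‖(x, y)‖² ≤ L² ‖F(x, y)‖` (`map_lower_bound`). With `c = log v(1 - ab) - 2 log L`, taking
logarithms and iterating gives
`2⁻ⁿ log ‖Fⁿ(x, y)‖ ≥ log ‖(x, y)‖ + c (1/2 + ⋯ + 2⁻ⁿ) = log ‖(x, y)‖ + c (1 - 2⁻ⁿ)`,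
and the claim follows in the limit.
-/

/-- The bound for one coordinate: `P` and `Q` have norm at most `M`, and the elimination identity
expresses `(1 - ab) x³` through them. The other coordinate follows by exchanging roles. -/
lemma coordinate_bound {K : Type*} [Field K] (v : AbsoluteValue K ℝ) (hv : IsNonarchimedean v)
    (a b x y : K) {L N M : ℝ} (hL : 1 ≤ L) (ha : v a ≤ L) (hb : v b ≤ L)
    (hx : v x ≤ N) (hy : v y ≤ N)
    (hP : v (a * x * y + x ^ 2) ≤ M) (hQ : v (b * x * y + y ^ 2) ≤ M) :
    v (1 - a * b) * v x ^ 3 ≤ L ^ 2 * N * M := by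
  have hN : 0 ≤ N := (v.nonneg x).trans hx
  have hL0 : 0 ≤ L := zero_le_one.trans hL
  have hsub : ∀ s t : K, v (s - t) ≤ max (v s) (v t) := fun s t => by
    have h := hv s (-t)
    rwa [v.map_neg, ← sub_eq_add_neg] at h
  have hδ : v (1 - a * b) ≤ L ^ 2 := by
    refine (hsub _ _).trans (max_le ?_ ?_)
    · rw [v.map_one]; exact one_le_pow₀ hL
    · rw [v.map_mul, sq]; gcongr
  have h1 : v ((1 - a * b) * x - a * y) ≤ L ^ 2 * N := by
    refine (hsub _ _).trans (max_le ?_ ?_)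
    · rw [v.map_mul]; gcongr
    · rw [v.map_mul]
      have : v a ≤ L ^ 2 := ha.trans (le_self_pow₀ hL two_ne_zero)
      gcongr
  have h2 : v (a ^ 2 * x) ≤ L ^ 2 * N := by
    rw [v.map_mul, v.map_pow]; gcongr
  have key : (1 - a * b) * x ^ 3 = ((1 - a * b) * x - a * y) * (a * x * y + x ^ 2)
      + (a ^ 2 * x) * (b * x * y + y ^ 2) := by ring
  rw [← v.map_pow, ← v.map_mul, key]
  refine (hv _ _).trans (max_le ?_ ?_)
  · rw [v.map_mul]; gcongr
  · rw [v.map_mul]; gcongr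

lemma map_lower_bound {K : Type*} [Field K] (v : AbsoluteValue K ℝ) (hv : IsNonarchimedean v)
    (a b x y : K) (h : 0 < max (v x) (v y)) :
    v (1 - a * b) * max (v x) (v y) ^ 2 ≤ max 1 (max (v a) (v b)) ^ 2 *
      max (v (a * x * y + x ^ 2)) (v (b * x * y + y ^ 2)) := by
  set N := max (v x) (v y) with hN
  set M := max (v (a * x * y + x ^ 2)) (v (b * x * y + y ^ 2)) with hM
  set L := max 1 (max (v a) (v b)) with hLdef
  have hL : 1 ≤ L := le_max_left _ _
  have ha : v a ≤ L := (le_max_left _ _).trans (le_max_right _ _)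
  have hb : v b ≤ L := (le_max_right _ _).trans (le_max_right _ _)
  have hx : v x ≤ N := le_max_left _ _
  have hy : v y ≤ N := le_max_right _ _
  have hP : v (a * x * y + x ^ 2) ≤ M := le_max_left _ _
  have hQ : v (b * x * y + y ^ 2) ≤ M := le_max_right _ _
  have h1 := coordinate_bound v hv a b x y hL ha hb hx hy hP hQ
  have h2 := coordinate_bound (M := M) v hv b a y x hL hb ha hy hx
    (by rwa [mul_right_comm]) (by rwa [mul_right_comm])
  rw [mul_comm b a] at h2
  have h3 : v (1 - a * b) * N ^ 3 ≤ L ^ 2 * N * M := by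
    rcases max_choice (v x) (v y) with e | e
    · rw [hN.trans e] at h1 ⊢; exact h1
    · rw [hN.trans e] at h2 ⊢; exact h2
  refine le_of_mul_le_mul_right ?_ h
  linarith

/-- Nonarchimedean version of the quadratic Green's function bound:
for the lift `F(x,y) = (λ₀xy + x², λ_∞xy + y²)` with `λ₀λ_∞ ≠ 1`, if
`2^{-n} log ‖Fⁿ(x,y)‖_v → H` then
`H ≥ log ‖(x,y)‖_v - 2 log max{1, v(λ₀), v(λ_∞)} + log v(1 - λ₀λ_∞)`. -/
theorem quadratic_greens_function_lower_bound_nonarch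
    {K : Type*} [Field K] [CharZero K]
    (v : AbsoluteValue K ℝ) (hv : IsNonarchimedean v)
    (lam₀ lam₁ : K) (hlam : lam₀ * lam₁ ≠ 1)
    (F : K × K → K × K)
    (hF : ∀ p : K × K, F p = (lam₀ * p.1 * p.2 + p.1 ^ 2, lam₁ * p.1 * p.2 + p.2 ^ 2))
    (x y : K) (hxy : (x, y) ≠ (0, 0))
    (H : ℝ)
    (hH : Filter.Tendsto
      (fun n : ℕ =>
        Real.log (max (v ((F^[n] (x, y)).1)) (v ((F^[n] (x, y)).2))) / (2 : ℝ) ^ n)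
      Filter.atTop (nhds H)) :
    H ≥ Real.log (max (v x) (v y))
      - 2 * Real.log (max 1 (max (v lam₀) (v lam₁)))
      + Real.log (v (1 - lam₀ * lam₁)) := by
  set δ := v (1 - lam₀ * lam₁) with hδ
  set L := max 1 (max (v lam₀) (v lam₁)) with hL
  have hLpos : 0 < L := lt_of_lt_of_le one_pos (le_max_left _ _)
  have hδpos : 0 < δ := v.pos (sub_ne_zero.mpr hlam.symm)
  have hN0 : 0 < max (v x) (v y) := by
    by_cases hx : x = 0
    · have hy : y ≠ 0 := fun hy => hxy (by rw [hx, hy])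
      exact lt_max_of_lt_right (v.pos hy)
    · exact lt_max_of_lt_left (v.pos hx)
  have hstep : ∀ n : ℕ,
      0 < max (v ((F^[n] (x, y)).1)) (v ((F^[n] (x, y)).2)) ∧
      2 ^ n * Real.log (max (v x) (v y)) + (2 ^ n - 1) * (Real.log δ - 2 * Real.log L)
        ≤ Real.log (max (v ((F^[n] (x, y)).1)) (v ((F^[n] (x, y)).2))) := by
    intro n
    induction n with
    | zero => simpa using hN0
    | succ n ih =>
      obtain ⟨hpos, hle⟩ := ih
      rw [Function.iterate_succ_apply', hF]
      have hmap := map_lower_bound v hv lam₀ lam₁ _ _ hpos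
      rw [← hδ, ← hL] at hmap
      have hleft := mul_pos hδpos (pow_pos hpos 2)
      have hMpos := pos_of_mul_pos_right (hleft.trans_le hmap) (pow_pos hLpos 2).le
      refine ⟨hMpos, ?_⟩
      have hlog := Real.log_le_log hleft hmap
      rw [Real.log_mul hδpos.ne' (pow_pos hpos 2).ne', Real.log_mul (pow_pos hLpos 2).ne' hMpos.ne',
        Real.log_pow, Real.log_pow] at hlog
      push_cast at hlog
      rw [pow_succ]
      linarith
  have hlim : Filter.Tendsto (fun n : ℕ => Real.log (max (v x) (v y))
      + (1 - (1 / 2 : ℝ) ^ n) * (Real.log δ - 2 * Real.log L)) Filter.atTop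
      (nhds (Real.log (max (v x) (v y)) + (1 - 0) * (Real.log δ - 2 * Real.log L))) :=
    ((tendsto_const_nhds.sub (tendsto_pow_atTop_nhds_zero_of_lt_one (by norm_num)
      (by norm_num))).mul_const _).const_add _
  have hfin := le_of_tendsto_of_tendsto' hlim hH fun n => by
    rw [le_div_iff₀ (by positivity)]
    refine le_trans (le_of_eq ?_) (hstep n).2
    rw [one_div, inv_pow]
    field_simp
  linarith
end

section
/- Let K be an algebraically closed field of characteristic zero equipped with a nonarchimedean absolute value v. Let λ₀, λ_∞ ∈ K with λ₀ λ_∞ ≠ 1 and 0 < v(λ_∞) < v(4), and let f(z) = (λ₀ z + z²)/(λ_∞ z + 1). Then there exists w ∈ K with λ_∞ w² + 2w + λ₀ = 0 such that λ_∞ w + 1 ≠ 0 and, defining z₀ = f(w) and recursively z_k = f(z_{k−1}) for k ≥ 1, one has for every k ≥ 1: λ_∞ z_{k−1} + 1 ≠ 0 (so z_k is defined) and v(z_k) ≥ (v(4) / v(λ_∞))^k. -/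
/-!
At a critical point `w` one has `f w = -w ^ 2`. The two critical points sum to `-2 / lam₁`, so one
of them has `v w ≥ v 2 / v lam₁`; for it `z = f w` satisfies
`v z ≥ v 4 / v lam₁ ^ 2 > 1 / v lam₁`, and `lam₀ = -(lam₁ * w ^ 2 + 2 * w)` gives
`v lam₀ ≤ v lam₁ * v z < v z`. On the region `v z > max (v lam₀) (1 / v lam₁)` the ultrametric
inequality yields `v (f z) = v z / v lam₁`, so the region is preserved, and each step gains a factor
`1 / v lam₁ ≥ v 4 / v lam₁`.
-/

/-- In a sum the strictly dominant term determines the absolute value. -/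
lemma nonarch_add_eq {K : Type*} [Field K] (v : AbsoluteValue K ℝ) (hv : IsNonarchimedean v)
    {x y : K} (h : v x < v y) : v (x + y) = v y := by
  have h1 := hv x y
  have h2 := hv (x + y) (-x)
  rw [add_neg_cancel_comm, v.map_neg] at h2
  rw [max_eq_right h.le] at h1
  rcases le_max_iff.1 h2 with h3 | h3 <;> linarith

/-- The critical point that is larger in absolute value. -/
lemma exists_large_critical {K : Type*} [Field K] [IsAlgClosed K]
    (v : AbsoluteValue K ℝ) (hv : IsNonarchimedean v) (a b : K) (hb : b ≠ 0) :
    ∃ w : K, b * w ^ 2 + 2 * w + a = 0 ∧ v 2 ≤ v b * v w := by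
  obtain ⟨s, hs⟩ := IsAlgClosed.exists_pow_nat_eq (1 - a * b) (n := 2) (by norm_num)
  have root : ∀ t : K, t ^ 2 = 1 - a * b →
      b * ((-1 + t) / b) ^ 2 + 2 * ((-1 + t) / b) + a = 0 := by
    intro t ht
    field_simp
    linear_combination ht
  have val : ∀ t : K, v b * v ((-1 + t) / b) = v (-1 + t) := by
    intro t
    rw [← v.map_mul, mul_div_cancel₀ _ hb]
  have h := hv (-1 + s) (-1 + -s)
  rw [show (-1 + s) + (-1 + -s) = -(2 : K) by ring, v.map_neg] at h
  rcases le_max_iff.1 h with h | h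
  · exact ⟨_, root s hs, by rwa [val]⟩
  · exact ⟨_, root (-s) (by rw [neg_sq, hs]), by rwa [val]⟩


/-- Nonarchimedean analogue of the quadratic critical-orbit escape:
over an algebraically closed field `K` of characteristic zero with nonarchimedean
absolute value `v`, if `λ₀λ_∞ ≠ 1` and `0 < v(λ_∞) < v(4)`, then some critical point
`w` of `f(z) = (λ₀ z + z²)/(λ_∞ z + 1)` has forward orbit `z_k` (with `z₀ = f(w)`)
satisfying `v(z_k) ≥ (v(4)/v(λ_∞))^k` for all `k ≥ 1`. -/
theorem quadratic_critical_orbit_escape_nonarch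
    {K : Type*} [Field K] [CharZero K] [IsAlgClosed K]
    (v : AbsoluteValue K ℝ) (hv : IsNonarchimedean v)
    (lam₀ lam₁ : K) (hlam : lam₀ * lam₁ ≠ 1)
    (hlam₁pos : 0 < v lam₁)
    (hlam₁small : v lam₁ < v 4)
    (f : K → K)
    (hf : ∀ z : K, f z = (lam₀ * z + z ^ 2) / (lam₁ * z + 1)) :
    ∃ w : K, lam₁ * w ^ 2 + 2 * w + lam₀ = 0 ∧ lam₁ * w + 1 ≠ 0 ∧
      ∀ k : ℕ, 1 ≤ k →
        lam₁ * (f^[k - 1] (f w)) + 1 ≠ 0 ∧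
        v (f^[k] (f w)) ≥ (v 4 / v lam₁) ^ k := by
  have hb : lam₁ ≠ 0 := v.pos_iff.1 hlam₁pos
  have h4 : v 4 ≤ 1 := by
    have h2 : v 2 ≤ 1 := by
      have := hv 1 1
      rw [one_add_one_eq_two] at this
      simpa using this
    rw [show (4 : K) = 2 * 2 by norm_num, v.map_mul]
    nlinarith [v.nonneg 2]
  have hb1 : v lam₁ < 1 := hlam₁small.trans_le h4
  obtain ⟨w, hw, hlarge⟩ := exists_large_critical v hv lam₀ lam₁ hb
  have hw1 : lam₁ * w + 1 ≠ 0 := by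
    intro h
    exact hlam (by linear_combination lam₁ * hw - (lam₁ * w + 1) * h)
  have hfw : f w = -w ^ 2 := by
    rw [hf, div_eq_iff hw1]
    linear_combination w * hw
  have hvfw : v (f w) = v w * v w := by rw [hfw, v.map_neg, sq, v.map_mul]
  have h22 : v 4 = v 2 * v 2 := by rw [← v.map_mul]; norm_num
  have hbig : 1 < v lam₁ * v (f w) := by
    have h1 : v 4 ≤ v lam₁ * (v lam₁ * v (f w)) := by
      rw [h22, hvfw]
      nlinarith [mul_self_le_mul_self (v.nonneg 2) hlarge]
    by_contra! h
    nlinarith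
  have hpos : 0 < v (f w) := by
    by_contra! h
    nlinarith
  have ha : v lam₀ < v (f w) := by
    have h1 : v lam₀ ≤ v lam₁ * v (f w) := by
      have h := hv (lam₁ * w ^ 2) (2 * w)
      rw [show lam₁ * w ^ 2 + 2 * w = -lam₀ by linear_combination hw, v.map_neg,
        v.map_mul, v.map_mul, v.map_pow] at h
      rw [hvfw]
      rcases le_max_iff.1 h with h | h
      · linarith
      · nlinarith [v.nonneg w]
    nlinarith
  -- The escape region `v lam₀ < v z`, `1 < v lam₁ * v z`, on which `v (f z) = v z / v lam₁`.
  have den : ∀ z, 1 < v lam₁ * v z → v (lam₁ * z + 1) = v lam₁ * v z := by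
    intro z hz
    rw [add_comm, nonarch_add_eq v hv (by simpa using hz), v.map_mul]
  have step : ∀ z, v lam₀ < v z → 1 < v lam₁ * v z → v (f z) = v z / v lam₁ := by
    intro z hz0 hz1
    have hz : v z ≠ 0 := by
      intro h
      rw [h] at hz1
      linarith
    rw [hf, map_div₀, den z hz1, show lam₀ * z + z ^ 2 = (lam₀ + z) * z by ring, v.map_mul,
      nonarch_add_eq v hv hz0]
    field_simp
  have inv : ∀ k : ℕ, v lam₀ < v (f^[k] (f w)) ∧ 1 < v lam₁ * v (f^[k] (f w)) ∧
      (v 4 / v lam₁) ^ k ≤ v (f^[k] (f w)) := by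
    intro k
    induction k with
    | zero =>
      refine ⟨ha, hbig, ?_⟩
      simp only [pow_zero, Function.iterate_zero, id]
      nlinarith
    | succ k ih =>
      obtain ⟨i0, i1, i2⟩ := ih
      rw [Function.iterate_succ_apply', step _ i0 i1]
      have hz : 0 < v (f^[k] (f w)) := (v.nonneg _).trans_lt i0
      have hle : v (f^[k] (f w)) ≤ v (f^[k] (f w)) / v lam₁ :=
        le_div_self hz.le hlam₁pos hb1.le
      refine ⟨i0.trans_le hle, i1.trans_le (by gcongr), ?_⟩
      rw [pow_succ, ← mul_div_assoc]
      gcongr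
      calc (v 4 / v lam₁) ^ k * v 4 ≤ v (f^[k] (f w)) * 1 := by gcongr
        _ = _ := mul_one _
  refine ⟨w, hw, hw1, fun k _ => ⟨fun h => ?_, (inv k).2.2⟩⟩
  have h1 := (inv (k - 1)).2.1
  rw [← den _ h1, h, v.map_zero] at h1
  linarith
end
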